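/- Let Σ_Λ be a compact blur shift space (with the subspace topology inherited from the full blur shift Σ). Then the following statements are equivalent: (i) B_1(Λ) is countable; (ii) Σ_Λ is first countable; (iii) Σ_Λ is second countable; (iv) Σ_Λ is separable; (v) Σ_Λ is metrizable. -/

import Mathlib

open Set Filter Topology

namespace BlurPaper

/-- The extended alphabet `Ā = A ⊕ V`, where each blurred set `H ∈ V` is regarded
as a new symbol `H̃`. -/
abbrev Symb (A : Type*) (V : Set (Set A)) := A ⊕ {H : Set A // H ∈ V}

/-- `V` is a family of blurred sets: every member is infinite and two distinct members
have finite intersection. -/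
def IsBlurFamily {A : Type*} (V : Set (Set A)) : Prop :=
  (∀ H ∈ V, H.Infinite) ∧ ∀ G ∈ V, ∀ H ∈ V, G ≠ H → (G ∩ H).Finite

/-- The full blur shift `Σ`: sequences over `Ā` such that a blur symbol is followed
by the same blur symbol. -/
def FullBlur (A : Type*) (V : Set (Set A)) : Set (ℕ → Symb A V) :=
  {x | ∀ (i : ℕ) (H : {H : Set A // H ∈ V}), x i = Sum.inr H → x (i + 1) = Sum.inr H}

/-- Generalized cylinder `Z(α)`. -/
def Z (A : Type*) (V : Set (Set A)) (α : List A) : Set (FullBlur A V) :=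
  {x | ∀ i : Fin α.length, x.1 i = Sum.inl (α.get i)}

/-- Generalized cylinder `Z(α, H, F)`. -/
def ZH (A : Type*) (V : Set (Set A)) (α : List A) (H : {H : Set A // H ∈ V})
    (F : Set A) : Set (FullBlur A V) :=
  {x | (∀ i : Fin α.length, x.1 i = Sum.inl (α.get i)) ∧
    (x.1 α.length = Sum.inr H ∨ ∃ a ∈ H.1 \ F, x.1 α.length = Sum.inl a)}

/-- The collection of all generalized cylinders. -/
def Cylinders (A : Type*) (V : Set (Set A)) : Set (Set (FullBlur A V)) :=
  {U | ∃ α : List A, U = Z A V α} ∪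
  {U | ∃ (α : List A) (H : {H : Set A // H ∈ V}) (F : Set A),
    F ⊆ H.1 ∧ F.Finite ∧ U = ZH A V α H F}

/-- The topology on the full blur shift generated by the generalized cylinders. -/
def tau (A : Type*) (V : Set (Set A)) : TopologicalSpace (FullBlur A V) :=
  TopologicalSpace.generateFrom (Cylinders A V)

/-- The shift map on the full blur shift. -/
def shift (A : Type*) (V : Set (Set A)) : FullBlur A V → FullBlur A V :=
  fun x => ⟨fun i => x.1 (i + 1), fun i H h => x.2 (i + 1) H h⟩

/-- The shift map on `A^ℕ`. -/
def shiftSeq (A : Type*) : (ℕ → A) → ℕ → A := fun x i => x (i + 1)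

/-- The prodiscrete topology on `A^ℕ` (product of discrete topologies). -/
def prodDiscrete (A : Type*) : TopologicalSpace (ℕ → A) :=
  @Pi.topologicalSpace ℕ (fun _ => A) fun _ => ⊥

/-- A (classical) shift space over `A`: closed in the prodiscrete topology and
invariant under the shift map. -/
def IsShiftSpace {A : Type*} (Λ : Set (ℕ → A)) : Prop :=
  @IsClosed _ (prodDiscrete A) Λ ∧ ∀ x ∈ Λ, shiftSeq A x ∈ Λ

/-- `w ∈ B(Y)`: the finite word `w` appears as an initial word of some element of `Y`. -/
def InLang {A : Type*} (Y : Set (ℕ → A)) (w : List A) : Prop :=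
  ∃ x ∈ Y, ∀ i : Fin w.length, x i = w.get i

/-- The follower set `F_Y(w) = {a : w a ∈ B(Y)}`. -/
def Fol {A : Type*} (Y : Set (ℕ → A)) (w : List A) : Set A :=
  {a | InLang Y (w ++ [a])}

/-- The predecessor set `P_Y(a) = {b : b a ∈ B(Y)}`. -/
def Pred {A : Type*} (Y : Set (ℕ → A)) (a : A) : Set A :=
  {b | InLang Y [b, a]}

/-- `B₁(Y)`: the set of letters occurring in sequences of `Y`. -/
def letters {A : Type*} (Y : Set (ℕ → A)) : Set A :=
  {a | ∃ x ∈ Y, ∃ i, x i = a}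

/-- The canonical embedding `A^ℕ → Σ`. -/
def embed (A : Type*) (V : Set (Set A)) : (ℕ → A) → FullBlur A V :=
  fun x => ⟨fun i => Sum.inl (x i), fun _ _ h => absurd h (by simp)⟩

/-- The point `(a₀ … a_{n-1} H̃ H̃ H̃ …)` of the full blur shift. -/
def wordBlur {A : Type*} {V : Set (Set A)} (α : List A) (H : {H : Set A // H ∈ V}) :
    FullBlur A V :=
  ⟨fun i => if h : i < α.length then Sum.inl (α.get ⟨i, h⟩) else Sum.inr H, by
    intro i K hK
    by_cases h : i < α.length
    · simp only [dif_pos h] at hK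
      exact absurd hK (by simp)
    · simp only [dif_neg h] at hK
      simp only [dif_neg (by omega : ¬ i + 1 < α.length)]
      exact hK⟩

/-- The boundary `∂Y`: points `(a₀ … a_{n-1} H̃ H̃ …)` with `a₀ … a_{n-1} ∈ B(Y)` and
`F_Y(a₀ … a_{n-1}) ∩ H` infinite. -/
def boundary (A : Type*) (V : Set (Set A)) (Y : Set (ℕ → A)) : Set (FullBlur A V) :=
  {z | ∃ (α : List A) (H : {H : Set A // H ∈ V}),
    z = wordBlur α H ∧ InLang Y α ∧ (Fol Y α ∩ H.1).Infinite}

/-- The blur shift space `Σ_Y = Y ∪ ∂Y` of `Y` with resolution `V`. -/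
def SigmaOf (A : Type*) (V : Set (Set A)) (Y : Set (ℕ → A)) : Set (FullBlur A V) :=
  embed A V '' Y ∪ boundary A V Y

/-- The subspace topology inherited from the full blur shift. -/
def subTau (A : Type*) (V : Set (Set A)) (X : Set (FullBlur A V)) :
    TopologicalSpace X :=
  TopologicalSpace.induced Subtype.val (tau A V)

/-- `V_Λ`: the blurred sets that appear in `Σ_Λ`, i.e. those meeting `B₁(Λ)` in an
infinite set. -/
def VLam (A : Type*) (V : Set (Set A)) (Λ : Set (ℕ → A)) : Set (Set A) :=
  {H | H ∈ V ∧ (letters Λ ∩ H).Infinite}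


section helpers

variable {A : Type*} {V : Set (Set A)}

lemma mem_Z {α : List A} {x : FullBlur A V} :
    x ∈ Z A V α ↔ ∀ (i : ℕ) (h : i < α.length), x.1 i = Sum.inl (α[i]) :=
  ⟨fun h i hi => h ⟨i, hi⟩, fun h i => h i.1 i.2⟩

lemma mem_Z_append {α : List A} {a : A} {x : FullBlur A V} :
    x ∈ Z A V (α ++ [a]) ↔ x ∈ Z A V α ∧ x.1 α.length = Sum.inl a := by
  simp only [mem_Z]
  constructor
  · intro h
    refine ⟨fun i hi => ?_, ?_⟩
    · rw [h i (by simp; omega)]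
      simp [List.getElem_append_left hi]
    · rw [h α.length (by simp)]
      simp
  · rintro ⟨h1, h2⟩ i hi
    by_cases h : i < α.length
    · rw [h1 i h]
      simp [List.getElem_append_left h]
    · have : i = α.length := by simp at hi; omega
      subst this
      rw [h2]; simp

lemma mem_ZH {α : List A} {H : {H : Set A // H ∈ V}} {F : Set A} {x : FullBlur A V} :
    x ∈ ZH A V α H F ↔ x ∈ Z A V α ∧
      (x.1 α.length = Sum.inr H ∨ ∃ a ∈ H.1 \ F, x.1 α.length = Sum.inl a) := Iff.rfl

lemma mem_Z_nil {x : FullBlur A V} : x ∈ Z A V [] := by simp [mem_Z]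

lemma open_Z (α : List A) : IsOpen[tau A V] (Z A V α) :=
  TopologicalSpace.isOpen_generateFrom_of_mem (Or.inl ⟨α, rfl⟩)

lemma open_ZH (α : List A) (H : {H : Set A // H ∈ V}) (F : Set A) (h : F ⊆ H.1)
    (hF : F.Finite) : IsOpen[tau A V] (ZH A V α H F) :=
  TopologicalSpace.isOpen_generateFrom_of_mem (Or.inr ⟨α, H, F, h, hF, rfl⟩)

lemma closed_Z (α : List A) : IsClosed[tau A V] (Z A V α) := by
  letI := tau A V
  induction α using List.reverseRecOn with
  | nil =>
    have : Z A V [] = univ := eq_univ_of_forall fun x => mem_Z_nil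
    rw [this]; exact isClosed_univ
  | append_singleton α a ih =>
    rw [← isOpen_compl_iff]
    have : (Z A V (α ++ [a]))ᶜ = (Z A V α)ᶜ ∪ (⋃ b ∈ {b | b ≠ a}, Z A V (α ++ [b])) ∪
        ⋃ H : {H : Set A // H ∈ V}, ZH A V α H ({a} ∩ H.1) := by
      ext x
      simp only [mem_compl_iff, mem_Z_append, mem_union, mem_iUnion, mem_ZH]
      rcases hx : x.1 α.length with b | H
      · simp; grind
      · simp; grind
    rw [this]
    refine (ih.isOpen_compl.union (isOpen_biUnion fun b _ => open_Z _)).union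
      (isOpen_iUnion fun H => open_ZH _ _ _ inter_subset_right ?_)
    exact (finite_singleton a).inter_of_left _

lemma closed_ZH (hV : IsBlurFamily V) (α : List A) (H : {H : Set A // H ∈ V}) (F : Set A) :
    IsClosed[tau A V] (ZH A V α H F) := by
  letI := tau A V
  rw [← isOpen_compl_iff]
  have : (ZH A V α H F)ᶜ = (Z A V α)ᶜ ∪ (⋃ b ∈ {b | b ∉ H.1 \ F}, Z A V (α ++ [b])) ∪
      ⋃ G ∈ {G : {H : Set A // H ∈ V} | G ≠ H}, ZH A V α G (G.1 ∩ H.1) := by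
    ext x
    simp only [mem_compl_iff, mem_Z_append, mem_union, mem_iUnion, mem_ZH]
    rcases hx : x.1 α.length with b | K
    · simp; grind
    · simp; grind
  rw [this]
  refine ((closed_Z α).isOpen_compl.union (isOpen_biUnion fun b _ => open_Z _)).union
    (isOpen_biUnion fun G hG => open_ZH _ _ _ inter_subset_left ?_)
  exact hV.2 _ G.2 _ H.2 fun h => hG (Subtype.ext h)

lemma inr_stays {x : FullBlur A V} {i : ℕ} {H} (h : x.1 i = Sum.inr H) :
    ∀ j, i ≤ j → x.1 j = Sum.inr H := by
  intro j hj
  induction j, hj using Nat.le_induction with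
  | base => exact h
  | succ j _ ih => exact x.2 j H ih

lemma exists_prefix {x : FullBlur A V} {n : ℕ} (h : ∀ i < n, ∃ a, x.1 i = Sum.inl a) :
    ∃ α : List A, α.length = n ∧ x ∈ Z A V α := by
  choose f hf using h
  refine ⟨List.ofFn (fun i : Fin n => f i.1 i.2), by simp, ?_⟩
  rw [mem_Z]
  intro i hi
  rw [hf i (by simpa using hi)]; simp

lemma wordBlur_mem_Z (α : List A) (H : {H : Set A // H ∈ V}) : wordBlur α H ∈ Z A V α := by
  rw [mem_Z]; intro i hi; simp [wordBlur, hi]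

lemma wordBlur_length (α : List A) (H : {H : Set A // H ∈ V}) :
    (wordBlur α H).1 α.length = Sum.inr H := by simp [wordBlur]

lemma eq_wordBlur {x : FullBlur A V} {α : List A} {H} (h : x ∈ Z A V α)
    (h2 : x.1 α.length = Sum.inr H) : x = wordBlur α H := by
  apply Subtype.ext
  funext i
  by_cases hi : i < α.length
  · rw [mem_Z.1 h i hi, mem_Z.1 (wordBlur_mem_Z α H) i hi]
  · rw [inr_stays h2 i (by omega), inr_stays (wordBlur_length α H) i (by omega)]

/-- The separation lemma. -/
lemma separate {x y : FullBlur A V} (hxy : x ≠ y) :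
    (∃ α : List A, (x ∈ Z A V α ∧ y ∉ Z A V α) ∨ (y ∈ Z A V α ∧ x ∉ Z A V α)) ∨
    ∃ α H, x = wordBlur α H ∧ x ∈ ZH A V α H ∅ ∧ y ∉ ZH A V α H ∅ := by
  classical
  have hne : ∃ n, x.1 n ≠ y.1 n := by
    by_contra! h
    exact hxy (Subtype.ext (funext h))
  set n := Nat.find hne with hn
  have h1 : x.1 n ≠ y.1 n := Nat.find_spec hne
  have h2 : ∀ i < n, x.1 i = y.1 i := fun i hi => by
    by_contra h; exact Nat.find_min hne hi h
  have h3 : ∀ i < n, ∃ a, x.1 i = Sum.inl a := by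
    intro i hi
    rcases hx : x.1 i with a | H
    · exact ⟨a, rfl⟩
    · exact absurd ((inr_stays hx n hi.le).trans
        (inr_stays ((h2 i hi).symm.trans hx) n hi.le).symm) h1
  obtain ⟨α, hα, hxα⟩ := exists_prefix h3
  have hyα : y ∈ Z A V α := by
    rw [mem_Z] at hxα ⊢
    intro i hi
    rw [← h2 i (hα ▸ hi), hxα i hi]
  rw [← hα] at h1
  rcases hx : x.1 α.length with a | H
  · refine Or.inl ⟨α ++ [a], Or.inl ?_⟩
    simp only [mem_Z_append]
    exact ⟨⟨hxα, hx⟩, fun h => h1 (hx.trans h.2.symm)⟩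
  · rcases hy : y.1 α.length with a | G
    · refine Or.inl ⟨α ++ [a], Or.inr ?_⟩
      simp only [mem_Z_append]
      exact ⟨⟨hyα, hy⟩, fun h => h1 (h.2.trans hy.symm)⟩
    · refine Or.inr ⟨α, H, eq_wordBlur hxα hx, ⟨hxα, Or.inl hx⟩, ?_⟩
      rw [mem_ZH, hy]
      rw [hx, hy] at h1
      simp; grind

lemma mem_letters {Λ : Set (ℕ → A)} {x : FullBlur A V} (hx : x ∈ SigmaOf A V Λ) {i : ℕ} {a : A}
    (h : x.1 i = Sum.inl a) : a ∈ letters Λ := by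
  rcases hx with ⟨y, hy, rfl⟩ | ⟨α, H, rfl, ⟨y, hy, hyα⟩, -⟩
  · exact ⟨y, hy, i, Sum.inl_injective h⟩
  · by_cases hi : i < α.length
    · rw [mem_Z.1 (wordBlur_mem_Z α H) i hi] at h
      exact ⟨y, hy, i, (hyα ⟨i, hi⟩).trans (Sum.inl_injective h)⟩
    · rw [inr_stays (wordBlur_length α H) i (by omega)] at h
      cases h

lemma prefix_letters {Λ : Set (ℕ → A)} {x : FullBlur A V} (hx : x ∈ SigmaOf A V Λ) {α : List A}
    (h : x ∈ Z A V α) : ∀ a ∈ α, a ∈ letters Λ := by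
  intro a ha
  obtain ⟨i, hi, rfl⟩ := List.getElem_of_mem ha
  exact mem_letters hx (mem_Z.1 h i hi)

lemma first_letter {Λ : Set (ℕ → A)} (hΛ : IsShiftSpace Λ) {a : A} (ha : a ∈ letters Λ) :
    ∃ x ∈ Λ, x 0 = a := by
  obtain ⟨x, hx, i, hi⟩ := ha
  induction i generalizing x with
  | zero => exact ⟨x, hx, hi⟩
  | succ i ih => exact ih _ (hΛ.2 x hx) hi

lemma finite_blur {X : Set (FullBlur A V)} (hc : @IsCompact _ (tau A V) X) (α : List A) :
    {H : {H : Set A // H ∈ V} | wordBlur α H ∈ X}.Finite := by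
  letI := tau A V
  have key : ∀ x ∈ X, ∃ U ∈ 𝓝 x, {H : {H : Set A // H ∈ V} | wordBlur α H ∈ U}.Subsingleton := by
    intro x _
    by_cases hx : x ∈ Z A V α
    · rcases hx2 : x.1 α.length with a | H
      · refine ⟨_, (open_Z (α ++ [a])).mem_nhds (mem_Z_append.2 ⟨hx, hx2⟩), ?_⟩
        intro G hG
        have := (mem_Z_append.1 hG).2
        rw [wordBlur_length] at this
        cases this
      · refine ⟨_, (open_ZH α H ∅ (empty_subset _) finite_empty).mem_nhds
          ⟨hx, Or.inl hx2⟩, ?_⟩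
        have : ∀ G, wordBlur α G ∈ ZH A V α H ∅ → G = H := by
          intro G hG
          have := (mem_ZH.1 hG).2
          rw [wordBlur_length] at this
          simpa using this
        intro G hG K hK
        rw [this G hG, this K hK]
    · refine ⟨_, (closed_Z α).isOpen_compl.mem_nhds hx, ?_⟩
      intro G hG
      exact absurd (wordBlur_mem_Z α G) hG
  choose! U hU hS using key
  obtain ⟨t, ht, hcov⟩ := hc.elim_nhds_subcover U hU
  refine (t.finite_toSet.biUnion fun x hx => (hS x (ht x hx)).finite).subset ?_
  intro H hH
  simpa using hcov hH

lemma countable_letters {Λ : Set (ℕ → A)} (hΛ : IsShiftSpace Λ)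
    (hc : @IsCompact _ (tau A V) (SigmaOf A V Λ))
    (hH : ∀ H, wordBlur [] H ∈ SigmaOf A V Λ → (H.1 ∩ letters Λ).Countable) :
    (letters Λ).Countable := by
  letI := tau A V
  have key : ∀ x ∈ SigmaOf A V Λ, ∃ U ∈ 𝓝 x,
      {a | a ∈ letters Λ ∧ ∃ y ∈ U, y.1 0 = Sum.inl a}.Countable := by
    intro x hx
    rcases hx2 : x.1 0 with a | H
    · refine ⟨_, (open_Z ([] ++ [a])).mem_nhds (mem_Z_append.2 ⟨mem_Z_nil, hx2⟩), ?_⟩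
      refine (countable_singleton a).mono ?_
      rintro b ⟨-, y, hy, hb⟩
      have := (mem_Z_append.1 hy).2
      exact Sum.inl_injective (hb.symm.trans this)
    · refine ⟨_, (open_ZH [] H ∅ (empty_subset _) finite_empty).mem_nhds
          ⟨mem_Z_nil, Or.inl hx2⟩, ?_⟩
      have hw := eq_wordBlur (α := []) mem_Z_nil hx2
      refine (hH H (hw ▸ hx)).mono ?_
      rintro b ⟨hb, y, hy, hyb⟩
      refine ⟨?_, hb⟩
      have := (mem_ZH.1 hy).2
      simpa [hyb] using this
  choose! U hU hS using key
  obtain ⟨t, ht, hcov⟩ := hc.elim_nhds_subcover U hU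
  refine (t.countable_toSet.biUnion fun x hx => hS x (ht x hx)).mono ?_
  intro a ha
  obtain ⟨x, hx, hxa⟩ := first_letter hΛ ha
  have hm : embed A V x ∈ SigmaOf A V Λ := Or.inl ⟨x, hx, rfl⟩
  obtain ⟨z, hz, hz2⟩ := mem_iUnion₂.1 (hcov hm)
  exact mem_iUnion₂.2 ⟨z, hz, ha, _, hz2, by simp [embed, hxa]⟩

lemma nhds_blur {H : {H : Set A // H ∈ V}} {U : Set (FullBlur A V)} (hU : IsOpen[tau A V] U)
    (h : wordBlur [] H ∈ U) : ∃ F : Set A, F.Finite ∧ ZH A V [] H F ⊆ U := by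
  have hp : (wordBlur [] H : FullBlur A V).1 0 = Sum.inr H := wordBlur_length [] H
  have hnil : ∀ α : List A, wordBlur [] H ∈ Z A V α → α = [] := by
    intro α hα
    by_contra hne
    have := mem_Z.1 hα 0 (List.length_pos_iff.2 hne)
    rw [hp] at this
    cases this
  induction hU with
  | basic s hs =>
    rcases hs with ⟨α, rfl⟩ | ⟨α, G, F, hF, hFf, rfl⟩
    · rw [hnil α h]
      exact ⟨∅, finite_empty, fun x _ => mem_Z_nil⟩
    · have hα := hnil α h.1
      subst hα
      have := (mem_ZH.1 h).2
      rw [wordBlur_length] at this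
      simp at this
      subst this
      exact ⟨F, hFf, subset_rfl⟩
  | univ => exact ⟨∅, finite_empty, subset_univ _⟩
  | inter s t _ _ ihs iht =>
    obtain ⟨F, hF, h1⟩ := ihs h.1
    obtain ⟨G, hG, h2⟩ := iht h.2
    refine ⟨F ∪ G, hF.union hG, ?_⟩
    rintro x ⟨hx, hx2⟩
    refine ⟨h1 ⟨hx, hx2.imp id ?_⟩, h2 ⟨hx, hx2.imp id ?_⟩⟩ <;>
    · rintro ⟨a, ha, ha2⟩
      exact ⟨a, ⟨ha.1, fun h => ha.2 (by simp [h])⟩, ha2⟩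
  | sUnion S _ ih =>
    obtain ⟨s, hs, hps⟩ := h
    obtain ⟨F, hF, h1⟩ := ih s hs hps
    exact ⟨F, hF, h1.trans (subset_sUnion_of_mem hs)⟩

lemma first_countable_letters {Λ : Set (ℕ → A)} (hΛ : IsShiftSpace Λ)
    (hfc : @FirstCountableTopology (SigmaOf A V Λ) (subTau A V (SigmaOf A V Λ)))
    (H : {H : Set A // H ∈ V}) (hw : wordBlur [] H ∈ SigmaOf A V Λ) :
    (H.1 ∩ letters Λ).Countable := by
  letI := tau A V
  change FirstCountableTopology (SigmaOf A V Λ) at hfc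
  obtain ⟨U, hU⟩ := (𝓝 (⟨wordBlur [] H, hw⟩ : SigmaOf A V Λ)).exists_antitone_basis
  have : ∀ n, ∃ F : Set A, F.Finite ∧ Subtype.val ⁻¹' ZH A V [] H F ⊆ U n := by
    intro n
    obtain ⟨W, hW, hWU⟩ := mem_nhds_subtype _ _ _ |>.1 (hU.mem n)
    obtain ⟨O, hOW, hO, hpO⟩ := mem_nhds_iff.1 hW
    obtain ⟨F, hF, h⟩ := nhds_blur hO hpO
    exact ⟨F, hF, (preimage_mono (h.trans hOW)).trans hWU⟩
  choose F hF hFU using this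
  refine (countable_iUnion fun n => (hF n).countable).mono ?_
  rintro a ⟨haH, haL⟩
  by_contra hna
  have hO := open_ZH [] H {a} (by simpa using haH) (finite_singleton a)
  have hmem : (Subtype.val ⁻¹' ZH A V [] H {a} : Set (SigmaOf A V Λ)) ∈
      𝓝 (⟨wordBlur [] H, hw⟩ : SigmaOf A V Λ) :=
    (hO.preimage continuous_subtype_val).mem_nhds
      ⟨wordBlur_mem_Z [] H, Or.inl (wordBlur_length [] H)⟩
  obtain ⟨n, -, hn⟩ := hU.1.mem_iff.1 hmem
  obtain ⟨x, hx, hxa⟩ := first_letter hΛ haL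
  have hm : embed A V x ∈ SigmaOf A V Λ := Or.inl ⟨x, hx, rfl⟩
  have hx0 : (embed A V x).1 0 = Sum.inl a := by simp [embed, hxa]
  have h1 : (⟨embed A V x, hm⟩ : SigmaOf A V Λ) ∈ U n := by
    apply hFU n
    exact ⟨mem_Z_nil, Or.inr ⟨a, ⟨haH, fun h => hna (mem_iUnion.2 ⟨n, h⟩)⟩, hx0⟩⟩
  have h2 := (mem_ZH.1 (hn h1)).2
  simp [hx0] at h2

lemma t2_of_clopen {X : Type*} [TopologicalSpace X]
    (sep : ∀ x y : X, x ≠ y → ∃ c : Set X, IsClopen c ∧ ((x ∈ c ∧ y ∉ c) ∨ (y ∈ c ∧ x ∉ c))) :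
    T2Space X := by
  refine ⟨fun x y hxy => ?_⟩
  obtain ⟨c, hc, h | h⟩ := sep x y hxy
  · exact ⟨c, cᶜ, hc.isOpen, hc.compl.isOpen, h.1, h.2, disjoint_compl_right⟩
  · exact ⟨cᶜ, c, hc.compl.isOpen, hc.isOpen, h.2, h.1, disjoint_compl_left⟩

lemma sc_of_clopen {X : Type*} [TopologicalSpace X] [CompactSpace X] (C : Set (Set X))
    (hC : C.Countable) (hcl : ∀ c ∈ C, IsClopen c)
    (sep : ∀ x y : X, x ≠ y → ∃ c ∈ C, ((x ∈ c ∧ y ∉ c) ∨ (y ∈ c ∧ x ∉ c))) :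
    SecondCountableTopology X := by
  classical
  have := hC.to_subtype
  let φ : X → (C → Bool) := fun x c => decide (x ∈ c.1)
  have hφ : Continuous φ := by
    refine continuous_pi fun c => ?_
    have := (hcl c.1 c.2)
    refine continuous_discrete_rng.2 fun b => ?_
    cases b
    · convert this.compl.isOpen using 1
      ext x; simp [φ]
    · convert this.isOpen using 1
      ext x; simp [φ]
  have hinj : Function.Injective φ := by
    intro x y h
    by_contra hxy
    obtain ⟨c, hc, hh⟩ := sep x y hxy
    have := congrFun h ⟨c, hc⟩
    simp [φ] at this
    tauto
  exact (hφ.isClosedEmbedding hinj).isEmbedding.secondCountableTopology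

lemma t2_sub (hV : IsBlurFamily V) (X : Set (FullBlur A V)) : @T2Space X (subTau A V X) := by
  letI := tau A V
  change T2Space X
  apply t2_of_clopen
  intro x y hxy
  have hne : x.1 ≠ y.1 := fun h => hxy (Subtype.ext h)
  rcases separate hne with ⟨α, h⟩ | ⟨α, H, -, h⟩
  · exact ⟨Subtype.val ⁻¹' Z A V α,
      IsClopen.preimage (s := Z A V α) ⟨closed_Z α, open_Z α⟩ continuous_subtype_val, h⟩
  · exact ⟨Subtype.val ⁻¹' ZH A V α H ∅,
      IsClopen.preimage (s := ZH A V α H ∅)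
        ⟨closed_ZH hV α H ∅, open_ZH α H ∅ (empty_subset _) finite_empty⟩ continuous_subtype_val, Or.inl h⟩

lemma sc_sub (hV : IsBlurFamily V) {Λ : Set (ℕ → A)}
    (hc : @IsCompact _ (tau A V) (SigmaOf A V Λ)) (hL : (letters Λ).Countable) :
    @SecondCountableTopology (SigmaOf A V Λ) (subTau A V (SigmaOf A V Λ)) := by
  letI := tau A V
  change SecondCountableTopology (SigmaOf A V Λ)
  haveI : CompactSpace (SigmaOf A V Λ) := isCompact_iff_compactSpace.1 hc
  have hW : {α : List A | ∀ a ∈ α, a ∈ letters Λ}.Countable := by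
    have := hL.to_subtype
    refine (countable_range (List.map (Subtype.val : letters Λ → A))).mono ?_
    intro α hα
    rw [Set.range_list_map_coe]
    exact hα
  let C1 : Set (Set (SigmaOf A V Λ)) :=
    (fun α => Subtype.val ⁻¹' Z A V α) '' {α : List A | ∀ a ∈ α, a ∈ letters Λ}
  let C2 : Set (Set (SigmaOf A V Λ)) :=
    ⋃ α ∈ {α : List A | ∀ a ∈ α, a ∈ letters Λ},
      (fun H => Subtype.val ⁻¹' ZH A V α H ∅) '' {H | wordBlur α H ∈ SigmaOf A V Λ}
  apply sc_of_clopen (C1 ∪ C2)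
  · exact (hW.image _).union (hW.biUnion fun α _ => ((finite_blur hc α).image _).countable)
  · rintro c (⟨α, -, rfl⟩ | hc2)
    · exact IsClopen.preimage (s := Z A V α) ⟨closed_Z α, open_Z α⟩ continuous_subtype_val
    · obtain ⟨α, -, H, -, rfl⟩ := mem_iUnion₂.1 hc2
      exact IsClopen.preimage (s := ZH A V α H ∅)
        ⟨closed_ZH hV α H ∅, open_ZH α H ∅ (empty_subset _) finite_empty⟩ continuous_subtype_val
  · intro x y hxy
    have hne : x.1 ≠ y.1 := fun h => hxy (Subtype.ext h)
    rcases separate hne with ⟨α, h⟩ | ⟨α, H, hx, h⟩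
    · refine ⟨Subtype.val ⁻¹' Z A V α, Or.inl ⟨α, ?_, rfl⟩, h⟩
      rcases h with h | h
      · exact prefix_letters x.2 h.1
      · exact prefix_letters y.2 h.1
    · refine ⟨Subtype.val ⁻¹' ZH A V α H ∅, Or.inr (mem_iUnion₂.2 ⟨α, ?_, H, ?_, rfl⟩), Or.inl h⟩
      · exact prefix_letters x.2 h.1.1
      · change wordBlur α H ∈ SigmaOf A V Λ
        rw [← hx]; exact x.2

lemma sep_letters {Λ : Set (ℕ → A)} (hΛ : IsShiftSpace Λ)
    (hs : @TopologicalSpace.SeparableSpace (SigmaOf A V Λ) (subTau A V (SigmaOf A V Λ))) :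
    (letters Λ).Countable := by
  letI := tau A V
  change TopologicalSpace.SeparableSpace (SigmaOf A V Λ) at hs
  obtain ⟨D, hD, hDd⟩ := TopologicalSpace.exists_countable_dense (SigmaOf A V Λ)
  have : letters Λ ⊆ Sum.inl ⁻¹' ((fun x : SigmaOf A V Λ => x.1.1 0) '' D) := by
    intro a ha
    obtain ⟨x, hx, hxa⟩ := first_letter hΛ ha
    have hm : embed A V x ∈ SigmaOf A V Λ := Or.inl ⟨x, hx, rfl⟩
    obtain ⟨d, hd, hdD⟩ := hDd.exists_mem_open
      ((open_Z (V := V) ([] ++ [a])).preimage continuous_subtype_val)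
      ⟨⟨embed A V x, hm⟩, mem_Z_append.2 ⟨mem_Z_nil, by simp [embed, hxa]⟩⟩
    exact ⟨d, hd, (mem_Z_append.1 hdD).2⟩
  exact ((hD.image _).preimage Sum.inl_injective).mono this

end helpers

/-- For a compact blur shift space `Σ_Λ` the following are
equivalent: `B₁(Λ)` countable, first countable, second countable, separable,
metrizable. -/
theorem compact_tfae {A : Type*} (V : Set (Set A))
    (hV : IsBlurFamily V) (Λ : Set (ℕ → A)) (hΛ : IsShiftSpace Λ)
    (hc : @IsCompact _ (tau A V) (SigmaOf A V Λ)) :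
    List.TFAE
      [(letters Λ).Countable,
        @FirstCountableTopology (SigmaOf A V Λ) (subTau A V (SigmaOf A V Λ)),
        @SecondCountableTopology (SigmaOf A V Λ) (subTau A V (SigmaOf A V Λ)),
        @TopologicalSpace.SeparableSpace (SigmaOf A V Λ) (subTau A V (SigmaOf A V Λ)),
        @TopologicalSpace.MetrizableSpace (SigmaOf A V Λ)
          (subTau A V (SigmaOf A V Λ))] := by
  have h13 := fun h => sc_sub hV hc h
  have h41 := fun h => sep_letters (V := V) hΛ h
  have h21 := fun h => countable_letters hΛ hc (first_countable_letters hΛ h)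
  have ht2 := t2_sub hV (SigmaOf A V Λ)
  letI := tau A V
  change T2Space (SigmaOf A V Λ) at ht2
  haveI : CompactSpace (SigmaOf A V Λ) := isCompact_iff_compactSpace.1 hc
  change List.TFAE
      [(letters Λ).Countable, FirstCountableTopology (SigmaOf A V Λ),
        SecondCountableTopology (SigmaOf A V Λ),
        TopologicalSpace.SeparableSpace (SigmaOf A V Λ),
        TopologicalSpace.MetrizableSpace (SigmaOf A V Λ)]
  tfae_have 1 → 3 := h13
  tfae_have 4 → 1 := h41
  tfae_have 2 → 1 := h21
  tfae_have 3 → 2 := fun h => inferInstance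
  tfae_have 3 → 4 := fun h => inferInstance
  tfae_have 3 → 5 := fun h => inferInstance
  tfae_have 5 → 2 := fun h => by
    letI := TopologicalSpace.metrizableSpaceMetric (SigmaOf A V Λ)
    infer_instance
  tfae_finish

end BlurPaper
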